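/- Let ℓ > 0 and let γ : ℝ → ℝ³ be a continuous ℓ-periodic curve. Then γ is D₂-symmetric if and only if there exists a continuous arc α : [0, ℓ/4] → ℝ³ with α(0) ∈ ℝe₃ and α(ℓ/4) ∈ ℝe₁ such that γ coincides with the ℓ-periodic extension of the glued map built from α; in that case one may take α = γ restricted to [0, ℓ/4]. -/

import Mathlib

/-!
A curve is D₂-symmetric exactly when it satisfies `γ (t + ℓ/2) = R₂ (γ t)` and
`γ (ℓ/2 - t) = R₁ (γ t)`; the `R₃`-symmetry follows since `R₃ = R₁ R₂`, and so does
`ℓ`-periodicity since `R₂² = 1`. These parameter changes have fundamental domain `[0, ℓ/4]`, so a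
symmetric curve is glued from its restriction to `[0, ℓ/4]`, whose end points are fixed by `R₃`
and `R₁`.

Conversely, every glued map satisfies the first identity by construction. The translation by `ℓ/2`
then reduces the second identity to `t ∈ [0, ℓ/2)`, where it holds because the end point conditions
make the adjacent formulas for the glued map agree at `ℓ/4` and at `ℓ/2`.
-/

noncomputable section

open Real Set

/-- Euclidean three-space. -/
abbrev E3 : Type := EuclideanSpace ℝ (Fin 3)

/-- The vector (a,b,c) ∈ ℝ³ (with the Euclidean norm). -/
def vec3 (a b c : ℝ) : E3 := (WithLp.equiv 2 (Fin 3 → ℝ)).symm ![a, b, c]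

/-- The standard basis vectors. -/
def e1 : E3 := vec3 1 0 0
def e2 : E3 := vec3 0 1 0
def e3 : E3 := vec3 0 0 1

/-- The rotations `R₁, R₂, R₃` by angle π about the coordinate axes `ℝe₁, ℝe₂, ℝe₃`
(indexed by `0, 1, 2 : Fin 3`). -/
def Rot : Fin 3 → E3 → E3 :=
  ![fun x => vec3 (x 0) (-x 1) (-x 2),
    fun x => vec3 (-x 0) (x 1) (-x 2),
    fun x => vec3 (-x 0) (-x 1) (x 2)]

/-- The dihedral parameter transformations `ψ₁^ℓ(t) = ℓ/2 - t`, `ψ₂^ℓ(t) = t - ℓ/2`,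
`ψ₃^ℓ(t) = ℓ - t` (indexed by `0, 1, 2 : Fin 3`). -/
def psi (ℓ : ℝ) : Fin 3 → ℝ → ℝ :=
  ![fun t => ℓ / 2 - t, fun t => t - ℓ / 2, fun t => ℓ - t]

/-- An `ℓ`-periodic curve `γ : ℝ → ℝ³` is D₂-symmetric if `Rᵢ(γ(ψᵢ^ℓ(t))) = γ(t)`
for all `t ∈ ℝ` and `i = 1,2,3`. -/
def DihedralSymmetric (ℓ : ℝ) (γ : ℝ → E3) : Prop :=
  ∀ i : Fin 3, ∀ t : ℝ, Rot i (γ (psi ℓ i t)) = γ t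

/-- The `ℓ`-periodic extension of the glued map built from a generating arc `α`:
`g(t) = α(t)` on `[0, ℓ/4)`, `g(t) = Rᵢ(α(ψᵢ^ℓ(t)))` on `[iℓ/4, (i+1)ℓ/4)` for `i = 1,2,3`,
extended `ℓ`-periodically. -/
def glue (ℓ : ℝ) (α : ℝ → E3) (t : ℝ) : E3 :=
  let s := t - ℓ * (⌊t / ℓ⌋ : ℝ)
  if s < ℓ / 4 then α s
  else if s < ℓ / 2 then Rot 0 (α (psi ℓ 0 s))
  else if s < 3 * ℓ / 4 then Rot 1 (α (psi ℓ 1 s))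
  else Rot 2 (α (psi ℓ 2 s))

lemma Rot_apply (i j : Fin 3) (x : E3) : Rot i x j = if i = j then x j else -x j := by
  fin_cases i <;> fin_cases j <;> simp [Rot, vec3]

lemma Rot_involutive (i : Fin 3) : Function.Involutive (Rot i) := by
  intro x
  ext j
  simp only [Rot_apply]
  split_ifs <;> simp

lemma Rot_comm (i j : Fin 3) (x : E3) : Rot i (Rot j x) = Rot j (Rot i x) := by
  ext k
  simp only [Rot_apply]
  split_ifs <;> rfl

lemma Rot_Rot_of_ne {i j k : Fin 3} (hij : i ≠ j) (hik : i ≠ k) (hjk : j ≠ k) (x : E3) :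
    Rot i (Rot j x) = Rot k x := by
  ext m
  simp only [Rot_apply]
  split_ifs <;> first | omega | simp

lemma Rot_zero_Rot_one (x : E3) : Rot 0 (Rot 1 x) = Rot 2 x :=
  Rot_Rot_of_ne (by decide) (by decide) (by decide) x

lemma Rot_eq_self_iff (i : Fin 3) (x : E3) :
    Rot i x = x ↔ ∃ c : ℝ, x = c • EuclideanSpace.single i (1 : ℝ) := by
  constructor
  · intro h
    refine ⟨x i, ?_⟩
    ext j
    have hj : Rot i x j = x j := by rw [h]
    rw [Rot_apply] at hj
    by_cases hij : i = j
    · simp [hij]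
    · rw [if_neg hij, neg_eq_self] at hj
      simp [hj, Ne.symm hij]
  · rintro ⟨c, rfl⟩
    ext j
    by_cases hij : i = j <;> simp [Rot_apply, hij]

lemma e1_eq_single : e1 = EuclideanSpace.single 0 1 := by
  ext j
  fin_cases j <;> simp [e1, vec3]

lemma e3_eq_single : e3 = EuclideanSpace.single 2 1 := by
  ext j
  fin_cases j <;> simp [e3, vec3]

lemma eq_of_eqOn_Ico_of_add_eq {X : Type*} {σ : X → X} (hσ : Function.Injective σ)
    {f g : ℝ → X} {p : ℝ} (hp : 0 < p) (hf : ∀ t, f (t + p) = σ (f t))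
    (hg : ∀ t, g (t + p) = σ (g t)) (h : EqOn f g (Ico 0 p)) : f = g := by
  have hper : Function.Periodic (fun t => f t = g t) p := fun t => by
    simp only [hf, hg, hσ.eq_iff]
  funext t
  obtain ⟨s, hs, hts⟩ := hper.exists_mem_Ico₀ hp t
  exact hts.mpr (h hs)

section

variable {ℓ : ℝ} {γ α : ℝ → E3}

lemma dihedralSymmetric_iff_add_half_and_half_sub :
    DihedralSymmetric ℓ γ ↔
      (∀ t, γ (t + ℓ / 2) = Rot 1 (γ t)) ∧ ∀ t, γ (ℓ / 2 - t) = Rot 0 (γ t) := by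
  constructor
  · refine fun h => ⟨fun t => ?_, fun t => ?_⟩
    · simpa [psi] using (h 1 (t + ℓ / 2)).symm
    · simpa [psi] using (h 0 (ℓ / 2 - t)).symm
  · rintro ⟨htrans, hrefl⟩ i t
    fin_cases i
    · change Rot 0 (γ (ℓ / 2 - t)) = γ t
      rw [hrefl, Rot_involutive]
    · change Rot 1 (γ (t - ℓ / 2)) = γ t
      rw [← htrans, sub_add_cancel]
    · change Rot 2 (γ (ℓ - t)) = γ t
      rw [show ℓ - t = ℓ / 2 - t + ℓ / 2 by ring, htrans, hrefl, Rot_comm 1 0,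
        Rot_zero_Rot_one, Rot_involutive]

namespace DihedralSymmetric

lemma periodic (h : DihedralSymmetric ℓ γ) : Function.Periodic γ ℓ := fun t => by
  obtain ⟨htrans, -⟩ := dihedralSymmetric_iff_add_half_and_half_sub.mp h
  rw [← add_halves ℓ, ← add_assoc, htrans, htrans, Rot_involutive]

lemma Rot_two_apply_zero (h : DihedralSymmetric ℓ γ) : Rot 2 (γ 0) = γ 0 := by
  simpa [psi, h.periodic.eq] using h 2 0

lemma Rot_zero_apply_quarter (h : DihedralSymmetric ℓ γ) :
    Rot 0 (γ (ℓ / 4)) = γ (ℓ / 4) := by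
  have hfix : psi ℓ 0 (ℓ / 4) = ℓ / 4 := by
    change ℓ / 2 - ℓ / 4 = ℓ / 4
    ring
  simpa only [hfix] using h 0 (ℓ / 4)

lemma eq_glue (h : DihedralSymmetric ℓ γ) (t : ℝ) : γ t = glue ℓ γ t := by
  have hred : γ (t - ℓ * (⌊t / ℓ⌋ : ℝ)) = γ t := by
    rw [mul_comm]
    exact h.periodic.sub_int_mul_eq _
  simp only [glue, h _ _, hred, ite_self]

end DihedralSymmetric

lemma glue_periodic (hℓ : ℓ ≠ 0) (α : ℝ → E3) : Function.Periodic (glue ℓ α) ℓ := fun t => by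
  have hfloor : ⌊(t + ℓ) / ℓ⌋ = ⌊t / ℓ⌋ + 1 := by
    rw [add_div, div_self hℓ, Int.floor_add_one]
  have hred : t + ℓ - ℓ * ((⌊t / ℓ⌋ + 1 : ℤ) : ℝ) = t - ℓ * (⌊t / ℓ⌋ : ℝ) := by
    push_cast
    ring
  simp only [glue, hfloor, hred]

lemma glue_of_mem_Ico (α : ℝ → E3) {t : ℝ} (ht : t ∈ Ico 0 ℓ) :
    glue ℓ α t =
      if t < ℓ / 4 then α t
      else if t < ℓ / 2 then Rot 0 (α (ℓ / 2 - t))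
      else if t < 3 * ℓ / 4 then Rot 1 (α (t - ℓ / 2))
      else Rot 2 (α (ℓ - t)) := by
  have hℓ : 0 < ℓ := ht.1.trans_lt ht.2
  have hfloor : ⌊t / ℓ⌋ = 0 :=
    Int.floor_eq_zero_iff.mpr ⟨div_nonneg ht.1 hℓ.le, (div_lt_one hℓ).mpr ht.2⟩
  simp [glue, hfloor, psi]

lemma glue_add_half_of_mem_Ico (α : ℝ → E3) {t : ℝ} (ht : t ∈ Ico 0 (ℓ / 2)) :
    glue ℓ α (t + ℓ / 2) = Rot 1 (glue ℓ α t) := by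
  obtain ⟨ht0, ht1⟩ := ht
  rw [glue_of_mem_Ico α (t := t) ⟨ht0, by linarith⟩,
    glue_of_mem_Ico α (t := t + ℓ / 2) ⟨by linarith, by linarith⟩,
    if_neg (by linarith), if_neg (by linarith)]
  by_cases hquarter : t < ℓ / 4
  · rw [if_pos (by linarith), if_pos hquarter, add_sub_cancel_right]
  · rw [if_neg (by linarith), if_neg hquarter, if_pos ht1, Rot_comm, Rot_zero_Rot_one,
      show ℓ - (t + ℓ / 2) = ℓ / 2 - t by ring]

lemma glue_add_half (hℓ : 0 < ℓ) (α : ℝ → E3) (t : ℝ) :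
    glue ℓ α (t + ℓ / 2) = Rot 1 (glue ℓ α t) := by
  have hper := glue_periodic hℓ.ne' α
  refine congrFun (eq_of_eqOn_Ico_of_add_eq (f := fun t => glue ℓ α (t + ℓ / 2))
    (g := fun t => Rot 1 (glue ℓ α t)) Function.injective_id hℓ (fun t => ?_) (fun t => ?_)
    fun t ht => ?_) t
  · rw [add_right_comm, hper, id]
  · rw [hper, id]
  · rcases lt_or_ge t (ℓ / 2) with hlt | hge
    · exact glue_add_half_of_mem_Ico α ⟨ht.1, hlt⟩
    · have hprev := glue_add_half_of_mem_Ico (ℓ := ℓ) α (t := t - ℓ / 2)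
        ⟨by linarith, by linarith [ht.2]⟩
      rw [sub_add_cancel] at hprev
      change glue ℓ α (t + ℓ / 2) = Rot 1 (glue ℓ α t)
      rw [hprev, Rot_involutive, show t + ℓ / 2 = t - ℓ / 2 + ℓ by ring, hper]

lemma glue_of_mem_Icc_zero_quarter (hℓ : 0 < ℓ) (hα : Rot 0 (α (ℓ / 4)) = α (ℓ / 4)) {t : ℝ}
    (ht : t ∈ Icc 0 (ℓ / 4)) : glue ℓ α t = α t := by
  rw [glue_of_mem_Ico α ⟨ht.1, by linarith [ht.2]⟩]
  rcases ht.2.lt_or_eq with hlt | rfl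
  · rw [if_pos hlt]
  · rw [if_neg (lt_irrefl _), if_pos (by linarith), show ℓ / 2 - ℓ / 4 = ℓ / 4 by ring, hα]

lemma glue_of_mem_Icc_quarter_half (hℓ : 0 < ℓ) (hα : Rot 2 (α 0) = α 0) {t : ℝ}
    (ht : t ∈ Icc (ℓ / 4) (ℓ / 2)) : glue ℓ α t = Rot 0 (α (ℓ / 2 - t)) := by
  rw [glue_of_mem_Ico α ⟨by linarith [ht.1], by linarith [ht.2]⟩, if_neg (by linarith [ht.1])]
  rcases ht.2.lt_or_eq with hlt | rfl
  · rw [if_pos hlt]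
  · rw [if_neg (lt_irrefl _), if_pos (by linarith), sub_self, ← Rot_involutive 0 (Rot 1 _),
      Rot_zero_Rot_one, hα]

lemma glue_half_sub (hℓ : 0 < ℓ) (h₀ : Rot 2 (α 0) = α 0)
    (h₁ : Rot 0 (α (ℓ / 4)) = α (ℓ / 4)) (t : ℝ) :
    glue ℓ α (ℓ / 2 - t) = Rot 0 (glue ℓ α t) := by
  refine congrFun (eq_of_eqOn_Ico_of_add_eq (f := fun t => glue ℓ α (ℓ / 2 - t))
    (g := fun t => Rot 0 (glue ℓ α t)) (Rot_involutive 1).injective (half_pos hℓ)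
    (fun t => ?_) (fun t => ?_) fun t ht => ?_) t
  · rw [← Rot_involutive 1 (glue ℓ α (ℓ / 2 - (t + ℓ / 2))), ← glue_add_half hℓ,
      sub_add_eq_add_sub, add_sub_add_right_eq_sub]
  · rw [glue_add_half hℓ, Rot_comm]
  · change glue ℓ α (ℓ / 2 - t) = Rot 0 (glue ℓ α t)
    obtain ⟨ht0, ht1⟩ := ht
    rcases le_total t (ℓ / 4) with hle | hge
    · rw [glue_of_mem_Icc_zero_quarter hℓ h₁ ⟨ht0, hle⟩,
        glue_of_mem_Icc_quarter_half hℓ h₀ ⟨by linarith, by linarith⟩, sub_sub_cancel]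
    · rw [glue_of_mem_Icc_quarter_half hℓ h₀ ⟨hge, ht1.le⟩, Rot_involutive,
        glue_of_mem_Icc_zero_quarter hℓ h₁ ⟨by linarith, by linarith⟩]

lemma dihedralSymmetric_glue (hℓ : 0 < ℓ) (h₀ : Rot 2 (α 0) = α 0)
    (h₁ : Rot 0 (α (ℓ / 4)) = α (ℓ / 4)) : DihedralSymmetric ℓ (glue ℓ α) :=
  dihedralSymmetric_iff_add_half_and_half_sub.mpr ⟨glue_add_half hℓ α, glue_half_sub hℓ h₀ h₁⟩

end

theorem dihedralSymmetric_iff_glued_general (ℓ : ℝ) (hℓ : 0 < ℓ) (γ : ℝ → E3)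
    (hc : Continuous γ) :
    (DihedralSymmetric ℓ γ ↔
      ∃ α : ℝ → E3, ContinuousOn α (Icc 0 (ℓ / 4)) ∧
        (∃ c : ℝ, α 0 = c • e3) ∧ (∃ c : ℝ, α (ℓ / 4) = c • e1) ∧
        ∀ t, γ t = glue ℓ α t) ∧
    (DihedralSymmetric ℓ γ → ∀ t, γ t = glue ℓ γ t) := by
  simp only [e1_eq_single, e3_eq_single, ← Rot_eq_self_iff]
  refine ⟨⟨fun h => ⟨γ, hc.continuousOn, h.Rot_two_apply_zero, h.Rot_zero_apply_quarter,
    h.eq_glue⟩, ?_⟩, DihedralSymmetric.eq_glue⟩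
  rintro ⟨α, -, h₀, h₁, hglue⟩
  rw [funext hglue]
  exact dihedralSymmetric_glue hℓ h₀ h₁

/-- A continuous `ℓ`-periodic curve `γ` is D₂-symmetric if and only if
there is a continuous arc `α : [0, ℓ/4] → ℝ³` with `α(0) ∈ ℝe₃` and `α(ℓ/4) ∈ ℝe₁` such
that `γ` coincides with the `ℓ`-periodic extension of the glued map built from `α`; in
that case one may take `α = γ` restricted to `[0, ℓ/4]`. -/
theorem dihedralSymmetric_iff_glued (ℓ : ℝ) (hℓ : 0 < ℓ) (γ : ℝ → E3)
    (hc : Continuous γ) (hper : ∀ t, γ (t + ℓ) = γ t) :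
    (DihedralSymmetric ℓ γ ↔
      ∃ α : ℝ → E3, ContinuousOn α (Icc 0 (ℓ / 4)) ∧
        (∃ c : ℝ, α 0 = c • e3) ∧ (∃ c : ℝ, α (ℓ / 4) = c • e1) ∧
        ∀ t, γ t = glue ℓ α t) ∧
    (DihedralSymmetric ℓ γ → ∀ t, γ t = glue ℓ γ t) :=
  dihedralSymmetric_iff_glued_general ℓ hℓ γ hc
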